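/- Let (X,π) and (Y,σ) be semidynamical systems on metric spaces, let x ∈ X be asymptotically almost periodic and let y ∈ Y be comparable in limit with x. Then there exists a continuous map h : L⁺(x) → L⁺(y) such that: (a) 𝓛_{x,q}^∞ ⊆ 𝓛_{y,h(q)}^∞ for every q ∈ L⁺(x); (b) h(π(q,t)) = σ(h(q),t) for every q ∈ L⁺(x) and every t ≥ 0; and (c) for every q̃ ∈ P_x, every time reparametrization g with ρ_X(π(x,t), π(q̃,g(t))) → 0 as t → +∞, and every sequence (tₙ) ∈ 𝓛ₓ^∞, one has ρ_Y(σ(y,tₙ), σ(h(q̃), g(tₙ))) → 0 as n → +∞. -/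

import Mathlib

/-!
Fix `q ∈ L⁺(x)` and let `F_q` be the filter of large times `t` at which `π x t` is close to `q`.
Comparability makes `σ y` converge along every sequence tending to `F_q`; as any two such
sequences interleave into a third, the limits agree, so `σ y` converges along `F_q` itself. Call
the limit `h q`.

The properties of `h` are then about filters. For a limit point `q'` near `q`, the filter `F_q'` is
concentrated on times at which `σ y` is already close to `h q`, whence continuity. The shift
`t ↦ t + s` maps `F_q` to `F_(π q s)`, whence equivariance. Finally, if the motion of `q'`
reparametrized by `g` tracks that of `x`, then along `F_p` the point `π q' (g t)` tends to `p`
inside `L⁺(x)`, so `σ (h q') (g t) = h (π q' (g t))` and `σ y t` both tend to `h p`.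
-/

open Filter Topology
open scoped NNReal

/-- `π` is a semidynamical system on the metric space `Z`. -/
def IsSDS {Z : Type*} [MetricSpace Z] (π : Z → ℝ≥0 → Z) : Prop :=
  Continuous (fun p : Z × ℝ≥0 => π p.1 p.2) ∧ (∀ z, π z 0 = z) ∧
    ∀ z t s, π (π z t) s = π z (t + s)

/-- The positive limit set of a point `x` under `π`. -/
def limitSet {Z : Type*} [MetricSpace Z] (π : Z → ℝ≥0 → Z) (x : Z) : Set Z :=
  {p | ∃ t : ℕ → ℝ≥0, Tendsto t atTop atTop ∧
    Tendsto (fun n => π x (t n)) atTop (𝓝 p)}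

/-- `x` is an almost periodic point of the semidynamical system `π`. -/
def AlmostPer {Z : Type*} [MetricSpace Z] (π : Z → ℝ≥0 → Z) (x : Z) : Prop :=
  ∀ ε : ℝ, 0 < ε → ∃ T : ℝ≥0, 0 < T ∧ ∀ α : ℝ≥0, ∃ τ : ℝ≥0,
    α ≤ τ ∧ τ ≤ α + T ∧ 0 < τ ∧ ∀ t : ℝ≥0, dist (π x (t + τ)) (π x t) < ε

/-- The set `P_x`: points `z ∈ L⁺(x) ∩ L⁺(z)` whose motion tracks that of `x` up to a
time reparametrization (a homeomorphism `g` of `[0,∞)` with `g 0 = 0`). -/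
def Pset {Z : Type*} [MetricSpace Z] (π : Z → ℝ≥0 → Z) (x : Z) : Set Z :=
  {z | z ∈ limitSet π x ∧ z ∈ limitSet π z ∧
    ∃ g : ℝ≥0 ≃ₜ ℝ≥0, g 0 = 0 ∧
      Tendsto (fun t : ℝ≥0 => dist (π x t) (π z (g t))) atTop (𝓝 0)}

/-- `x` is asymptotically almost periodic: its motion tracks that of an almost periodic
point up to a time reparametrization. -/
def AsympAP {Z : Type*} [MetricSpace Z] (π : Z → ℝ≥0 → Z) (x : Z) : Prop :=
  ∃ p : Z, AlmostPer π p ∧ ∃ g : ℝ≥0 ≃ₜ ℝ≥0, g 0 = 0 ∧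
    Tendsto (fun t : ℝ≥0 => dist (π x t) (π p (g t))) atTop (𝓝 0)

section ClusterLimits

variable {α X Y : Type*} [TopologicalSpace X] [TopologicalSpace Y]

lemma exists_tendsto_of_forall_seq_tendsto [T2Space Y] {F : Filter α} [F.NeBot]
    [F.IsCountablyGenerated] {f : α → Y}
    (hf : ∀ u : ℕ → α, Tendsto u atTop F → ∃ l, Tendsto (f ∘ u) atTop (𝓝 l)) :
    ∃ l, Tendsto f F (𝓝 l) := by
  obtain ⟨u, hu⟩ := exists_seq_tendsto F
  obtain ⟨l, hl⟩ := hf u hu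
  refine ⟨l, tendsto_of_seq_tendsto fun v hv => ?_⟩
  let w : ℕ → α := fun n => if Even n then u (n / 2) else v (n / 2)
  have hhalf : Tendsto (fun n : ℕ => n / 2) atTop atTop :=
    Nat.tendsto_div_const_atTop two_ne_zero
  obtain ⟨m, hm⟩ := hf w ((hu.comp hhalf).if' (hv.comp hhalf))
  have heven : Tendsto (fun n : ℕ => 2 * n) atTop atTop :=
    StrictMono.tendsto_atTop fun _ _ _ => by lia
  have hodd : Tendsto (fun n : ℕ => 2 * n + 1) atTop atTop :=
    StrictMono.tendsto_atTop fun _ _ _ => by lia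
  have hum : Tendsto (f ∘ u) atTop (𝓝 m) :=
    (hm.comp heven).congr fun n => by simp [w]
  have hvm : Tendsto (f ∘ v) atTop (𝓝 m) :=
    (hm.comp hodd).congr fun n => by simp [w, Nat.mul_add_div]
  rwa [tendsto_nhds_unique hl hum]

lemma continuousOn_of_tendsto_inf_comap_nhds [RegularSpace Y] {F : Filter α} {φ : α → X}
    {f : α → Y} {h : X → Y} {s : Set X} (hs : ∀ q ∈ s, (F ⊓ comap φ (𝓝 q)).NeBot)
    (hf : ∀ q ∈ s, Tendsto f (F ⊓ comap φ (𝓝 q)) (𝓝 (h q))) : ContinuousOn h s := by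
  intro q hq
  refine (closed_nhds_basis (h q)).tendsto_right_iff.2 fun V ⟨hV, hVclosed⟩ => ?_
  obtain ⟨⟨S, U⟩, ⟨hS, hqU, hU⟩, hSU⟩ :=
    (F.basis_sets.inf ((nhds_basis_opens q).comap φ)).eventually_iff.1 (hf q hq hV)
  filter_upwards [self_mem_nhdsWithin, mem_nhdsWithin_of_mem_nhds (hU.mem_nhds hqU)]
    with q' hq's hq'U
  have := hs q' hq's
  have hmem : S ∩ φ ⁻¹' U ∈ F ⊓ comap φ (𝓝 q') :=
    inter_mem_inf hS (preimage_mem_comap (hU.mem_nhds hq'U))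
  exact hVclosed.mem_of_tendsto (hf q' hq's) (mem_of_superset hmem fun _ => @hSU _)

end ClusterLimits

section LimitMap

variable {X Y : Type*} [MetricSpace X] [MetricSpace Y]
  {π : X → ℝ≥0 → X} {σ : Y → ℝ≥0 → Y} {x q q' p : X} {y : Y} {h : X → Y}

/-- The point `y` is comparable in limit with `x`: `𝓛ₓ^∞ ⊆ 𝓛_y^∞`. -/
def ComparableInLimit (π : X → ℝ≥0 → X) (σ : Y → ℝ≥0 → Y) (x : X) (y : Y) : Prop :=
  ∀ t : ℕ → ℝ≥0, Tendsto t atTop atTop →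
    (∃ p, Tendsto (fun n => π x (t n)) atTop (𝓝 p)) →
    ∃ q, Tendsto (fun n => σ y (t n)) atTop (𝓝 q)

/-- The filter of large times `t` at which `π x t` is close to `q`. The sequences tending to it
are exactly those of `𝓛_{x,q}^∞`. -/
def timesNear (π : X → ℝ≥0 → X) (x q : X) : Filter ℝ≥0 :=
  atTop ⊓ comap (π x) (𝓝 q)

instance : (timesNear π x q).IsCountablyGenerated :=
  inferInstanceAs (atTop ⊓ comap (π x) (𝓝 q)).IsCountablyGenerated

lemma tendsto_timesNear_iff {ι : Type*} {F : Filter ι} {t : ι → ℝ≥0} :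
    Tendsto t F (timesNear π x q) ↔
      Tendsto t F atTop ∧ Tendsto (fun i => π x (t i)) F (𝓝 q) := by
  rw [timesNear, tendsto_inf, tendsto_comap_iff, Function.comp_def]

lemma tendsto_timesNear : Tendsto (π x) (timesNear π x q) (𝓝 q) :=
  tendsto_comap.mono_left inf_le_right

lemma mem_limitSet_iff_neBot_timesNear : q ∈ limitSet π x ↔ (timesNear π x q).NeBot := by
  constructor
  · rintro ⟨t, ht⟩
    exact (tendsto_timesNear_iff.2 ht).neBot
  · intro _
    obtain ⟨t, ht⟩ := exists_seq_tendsto (timesNear π x q)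
    exact ⟨t, tendsto_timesNear_iff.1 ht⟩

namespace IsSDS

lemma continuous_left (hπ : IsSDS π) (s : ℝ≥0) : Continuous fun z => π z s :=
  hπ.1.comp (Continuous.prodMk_left s)

lemma map_add (hπ : IsSDS π) (z : X) (t s : ℝ≥0) : π z (t + s) = π (π z t) s :=
  (hπ.2.2 z t s).symm

lemma tendsto_add_const_timesNear (hπ : IsSDS π) (x q : X) (s : ℝ≥0) :
    Tendsto (· + s) (timesNear π x q) (timesNear π x (π q s)) := by
  refine tendsto_timesNear_iff.2
    ⟨tendsto_atTop_mono (fun _ => le_self_add) (tendsto_id.mono_left inf_le_left), ?_⟩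
  simp only [hπ.map_add]
  exact ((hπ.continuous_left s).tendsto q).comp tendsto_timesNear

lemma map_mem_limitSet (hπ : IsSDS π) (hq : q ∈ limitSet π x) (s : ℝ≥0) :
    π q s ∈ limitSet π x := by
  rw [mem_limitSet_iff_neBot_timesNear] at hq ⊢
  exact (hπ.tendsto_add_const_timesNear x q s).neBot

end IsSDS

/-- On `L⁺(x)`, the map `h` sends `q` to the limit of `σ y t` as `t → +∞` with `π x t → q`.
Nothing is required of `h` outside `L⁺(x)`. -/
def IsLimitMap (π : X → ℝ≥0 → X) (σ : Y → ℝ≥0 → Y) (x : X) (y : Y) (h : X → Y) : Prop :=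
  ∀ q ∈ limitSet π x, Tendsto (σ y) (timesNear π x q) (𝓝 (h q))

lemma ComparableInLimit.exists_isLimitMap (hxy : ComparableInLimit π σ x y) :
    ∃ h, IsLimitMap π σ x y h := by
  have hlim : ∀ q ∈ limitSet π x, ∃ l, Tendsto (σ y) (timesNear π x q) (𝓝 l) := by
    intro q hq
    have := mem_limitSet_iff_neBot_timesNear.1 hq
    refine exists_tendsto_of_forall_seq_tendsto fun t ht => ?_
    obtain ⟨ht_top, htq⟩ := tendsto_timesNear_iff.1 ht
    exact hxy t ht_top ⟨q, htq⟩
  have : Nonempty Y := ⟨y⟩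
  choose! h hh using hlim
  exact ⟨h, hh⟩

namespace IsLimitMap

lemma tendsto_seq (hh : IsLimitMap π σ x y h) (hq : q ∈ limitSet π x) {t : ℕ → ℝ≥0}
    (ht : Tendsto t atTop atTop) (htq : Tendsto (fun n => π x (t n)) atTop (𝓝 q)) :
    Tendsto (fun n => σ y (t n)) atTop (𝓝 (h q)) :=
  (hh q hq).comp (tendsto_timesNear_iff.2 ⟨ht, htq⟩)

lemma mapsTo (hh : IsLimitMap π σ x y h) : Set.MapsTo h (limitSet π x) (limitSet σ y) :=
  fun _ hq => hq.imp fun _ ⟨ht, htq⟩ => ⟨ht, hh.tendsto_seq hq ht htq⟩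

lemma continuousOn (hh : IsLimitMap π σ x y h) : ContinuousOn h (limitSet π x) :=
  continuousOn_of_tendsto_inf_comap_nhds (fun _ => mem_limitSet_iff_neBot_timesNear.1) hh

lemma map_flow (hh : IsLimitMap π σ x y h) (hπ : IsSDS π) (hσ : IsSDS σ)
    (hq : q ∈ limitSet π x) (s : ℝ≥0) : h (π q s) = σ (h q) s := by
  have := mem_limitSet_iff_neBot_timesNear.1 hq
  have hleft : Tendsto (fun t => σ y (t + s)) (timesNear π x q) (𝓝 (h (π q s))) :=
    (hh _ (hπ.map_mem_limitSet hq s)).comp (hπ.tendsto_add_const_timesNear x q s)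
  have hright : Tendsto (fun t => σ y (t + s)) (timesNear π x q) (𝓝 (σ (h q) s)) := by
    simp only [hσ.map_add]
    exact ((hσ.continuous_left s).tendsto _).comp (hh q hq)
  exact tendsto_nhds_unique hleft hright

lemma tendsto_dist_of_tracking (hh : IsLimitMap π σ x y h) (hπ : IsSDS π) (hσ : IsSDS σ)
    (hq' : q' ∈ limitSet π x) {g : ℝ≥0 → ℝ≥0}
    (hg : Tendsto (fun t => dist (π x t) (π q' (g t))) atTop (𝓝 0)) (hp : p ∈ limitSet π x) :
    Tendsto (fun t => dist (σ y t) (σ (h q') (g t))) (timesNear π x p) (𝓝 0) := by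
  have htrack : Tendsto (fun t => π q' (g t)) (timesNear π x p) (𝓝[limitSet π x] p) :=
    tendsto_nhdsWithin_iff.2
      ⟨tendsto_timesNear.congr_dist (hg.mono_left inf_le_left),
        .of_forall fun t => hπ.map_mem_limitSet hq' (g t)⟩
  have himage : Tendsto (fun t => σ (h q') (g t)) (timesNear π x p) (𝓝 (h p)) := by
    simp only [← hh.map_flow hπ hσ hq']
    exact (hh.continuousOn p hp).tendsto.comp htrack
  simpa only [dist_self] using (hh p hp).dist himage

end IsLimitMap

end LimitMap

theorem stmt_10_general {X Y : Type*} [MetricSpace X] [MetricSpace Y]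
    {π : X → ℝ≥0 → X} {σ : Y → ℝ≥0 → Y} (hπ : IsSDS π) (hσ : IsSDS σ)
    {x : X} {y : Y} (hxy : ComparableInLimit π σ x y) :
    ∃ h : X → Y, ContinuousOn h (limitSet π x) ∧
      Set.MapsTo h (limitSet π x) (limitSet σ y) ∧
      (∀ q ∈ limitSet π x, ∀ t : ℕ → ℝ≥0, Tendsto t atTop atTop →
        Tendsto (fun n => π x (t n)) atTop (𝓝 q) →
        Tendsto (fun n => σ y (t n)) atTop (𝓝 (h q))) ∧
      (∀ q ∈ limitSet π x, ∀ s : ℝ≥0, h (π q s) = σ (h q) s) ∧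
      (∀ q' ∈ limitSet π x, ∀ g : ℝ≥0 → ℝ≥0,
        Tendsto (fun t : ℝ≥0 => dist (π x t) (π q' (g t))) atTop (𝓝 0) →
        ∀ t : ℕ → ℝ≥0, Tendsto t atTop atTop →
          (∃ p : X, Tendsto (fun n => π x (t n)) atTop (𝓝 p)) →
          Tendsto (fun n => dist (σ y (t n)) (σ (h q') (g (t n)))) atTop (𝓝 0)) := by
  obtain ⟨h, hh⟩ := hxy.exists_isLimitMap
  refine ⟨h, hh.continuousOn, hh.mapsTo, fun _ hq _ => hh.tendsto_seq hq,
    fun _ => hh.map_flow hπ hσ, ?_⟩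
  rintro q' hq' g hg t ht ⟨p, hp⟩
  exact (hh.tendsto_dist_of_tracking hπ hσ hq' hg ⟨t, ht, hp⟩).comp
    (tendsto_timesNear_iff.2 ⟨ht, hp⟩)

theorem stmt_10 {X Y : Type*} [MetricSpace X] [MetricSpace Y]
    (π : X → ℝ≥0 → X) (σ : Y → ℝ≥0 → Y) (hπ : IsSDS π) (hσ : IsSDS σ)
    (x : X) (y : Y) (hx : AsympAP π x)
    (hcomp : ∀ t : ℕ → ℝ≥0, Tendsto t atTop atTop →
      (∃ p : X, Tendsto (fun n => π x (t n)) atTop (𝓝 p)) →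
      ∃ q : Y, Tendsto (fun n => σ y (t n)) atTop (𝓝 q)) :
    ∃ h : X → Y, ContinuousOn h (limitSet π x) ∧
      Set.MapsTo h (limitSet π x) (limitSet σ y) ∧
      (∀ q ∈ limitSet π x, ∀ t : ℕ → ℝ≥0, Tendsto t atTop atTop →
        Tendsto (fun n => π x (t n)) atTop (𝓝 q) →
        Tendsto (fun n => σ y (t n)) atTop (𝓝 (h q))) ∧
      (∀ q ∈ limitSet π x, ∀ s : ℝ≥0, h (π q s) = σ (h q) s) ∧
      (∀ q' ∈ Pset π x, ∀ g : ℝ≥0 ≃ₜ ℝ≥0, g 0 = 0 →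
        Tendsto (fun t : ℝ≥0 => dist (π x t) (π q' (g t))) atTop (𝓝 0) →
        ∀ t : ℕ → ℝ≥0, Tendsto t atTop atTop →
          (∃ p : X, Tendsto (fun n => π x (t n)) atTop (𝓝 p)) →
          Tendsto (fun n => dist (σ y (t n)) (σ (h q') (g (t n)))) atTop (𝓝 0)) := by
  obtain ⟨h, hcont, hmaps, hlim, hflow, htrack⟩ := stmt_10_general hπ hσ hcomp
  exact ⟨h, hcont, hmaps, hlim, hflow, fun q' hq' g _ => htrack q' hq'.1 g⟩
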